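/- arXiv:2405.07443 — 7 statements merged into one kernel-verified Lean document; each statement's English description precedes it below -/
import Mathlib

section
/- Let n, p ∈ ℕ, let P be a symmetric n×n real matrix, S a symmetric p×p real matrix, C a p×n real matrix and ϱ a p×p real matrix. Set R̄ = ϱ C P Cᵀ ϱᵀ + S, assume R̄ is positive definite, and set K⋆ = P Cᵀ ϱᵀ R̄⁻¹. Define Ξᵤ(K) = (I − K ϱ C) P (I − K ϱ C)ᵀ + K S Kᵀ. Then for every n×p real matrix K, tr(Ξᵤ(K)) ≥ tr(Ξᵤ(K⋆)), with equality if and only if K = K⋆. -/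
open Matrix

/-- The trace of the updated filtering error covariance
`Ξᵤ(K) = (I − KϱC) P (I − KϱC)ᵀ + K S Kᵀ` is minimized exactly at the
Kalman-type gain `K⋆ = P Cᵀ ϱᵀ R̄⁻¹`: for every gain `K`,
`tr(Ξᵤ(K)) ≥ tr(Ξᵤ(K⋆))`, with equality iff `K = K⋆`. -/
theorem trace_minimized_iff_optimal_gain {n p : ℕ}
    (P : Matrix (Fin n) (Fin n) ℝ) (S : Matrix (Fin p) (Fin p) ℝ)
    (C : Matrix (Fin p) (Fin n) ℝ) (ρ : Matrix (Fin p) (Fin p) ℝ)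
    (hP : P.IsSymm) (hS : S.IsSymm)
    (Rb : Matrix (Fin p) (Fin p) ℝ) (hRb : Rb = ρ * C * P * Cᵀ * ρᵀ + S)
    (hRbPD : Rb.PosDef)
    (Kstar : Matrix (Fin n) (Fin p) ℝ) (hKstar : Kstar = P * Cᵀ * ρᵀ * Rb⁻¹)
    (Ξᵤ : Matrix (Fin n) (Fin p) ℝ → Matrix (Fin n) (Fin n) ℝ)
    (hΞᵤ : ∀ K, Ξᵤ K = (1 - K * ρ * C) * P * (1 - K * ρ * C)ᵀ + K * S * Kᵀ) :
    ∀ K, (Ξᵤ Kstar).trace ≤ (Ξᵤ K).trace ∧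
      ((Ξᵤ K).trace = (Ξᵤ Kstar).trace ↔ K = Kstar) := by
  have hG : Kstar * Rb = P * Cᵀ * ρᵀ := by
    rw [hKstar, Matrix.mul_assoc, Matrix.nonsing_inv_mul _ ((Matrix.isUnit_iff_isUnit_det _).1 hRbPD.isUnit),
      Matrix.mul_one]
  have hRs : Rbᵀ = Rb := by
    have := hRbPD.isHermitian.eq
    rwa [Matrix.conjTranspose_eq_transpose_of_trivial] at this
  have hGt : Rb * Kstarᵀ = ρ * C * P := by
    have := congrArg Matrix.transpose hG
    simpa [Matrix.transpose_mul, hRs, hP.eq, Matrix.mul_assoc] using this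
  have key : ∀ K, Ξᵤ K = P - K * (Rb * Kstarᵀ) - (Kstar * Rb) * Kᵀ + K * Rb * Kᵀ := by
    intro K
    rw [hΞᵤ, hG, hGt, hRb]
    simp only [Matrix.transpose_sub, Matrix.transpose_mul, Matrix.transpose_one, Matrix.sub_mul,
      Matrix.mul_sub, Matrix.mul_add, Matrix.add_mul, Matrix.one_mul, Matrix.mul_one,
      Matrix.mul_assoc]
    abel
  intro K
  have hd : Ξᵤ K = Ξᵤ Kstar + (K - Kstar) * Rb * (K - Kstar)ᵀ := by
    rw [key, key Kstar]
    simp only [Matrix.transpose_sub, Matrix.sub_mul, Matrix.mul_sub, Matrix.mul_assoc]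
    abel
  have htr : ((K - Kstar) * Rb * (K - Kstar)ᵀ).trace
      = ∑ i, (K - Kstar) i ⬝ᵥ (Rb *ᵥ (K - Kstar) i) := by
    unfold Matrix.trace
    refine Finset.sum_congr rfl fun i _ => ?_
    rw [Matrix.mul_assoc]
    rfl
  have hnn : ∀ i, 0 ≤ (K - Kstar) i ⬝ᵥ (Rb *ᵥ (K - Kstar) i) := fun i => by
    simpa using hRbPD.posSemidef.dotProduct_mulVec_nonneg ((K - Kstar) i)
  rw [hd, Matrix.trace_add, htr]
  refine ⟨le_add_of_nonneg_right (Finset.sum_nonneg fun i _ => hnn i), ?_, ?_⟩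
  · intro h
    have h0 := (Finset.sum_eq_zero_iff_of_nonneg (fun i _ => hnn i)).1 (add_eq_left.1 h)
    rw [← sub_eq_zero]
    funext i
    by_contra hne
    have := hRbPD.dotProduct_mulVec_pos (x := (K - Kstar) i) hne
    have h1 := h0 i (Finset.mem_univ i)
    simp only [star_trivial] at this
    linarith
  · rintro rfl
    rw [← htr]
    simp
end

section
/- Let q, r, c > 0 be real numbers, let P be a symmetric positive definite n×n real matrix with q·I ⪯ P, let S be a symmetric positive definite p×p real matrix with r·I ⪯ S, and let C be a p×n real matrix with C Cᵀ ⪯ c·I. Then the updated covariance Ξᵤ = P − P Cᵀ (C P Cᵀ + S)⁻¹ C P satisfies Ξᵤ ⪰ ε·I, where ε = (1/q + c/r)⁻¹. -/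
open Matrix

/-- Uniform lower bound on the minimized filtering error covariance: if
`q·I ⪯ P`, `r·I ⪯ S`, `C Cᵀ ⪯ c·I` with `P`, `S` symmetric positive definite,
then `Ξᵤ = P − P Cᵀ (C P Cᵀ + S)⁻¹ C P ⪰ ε·I` with `ε = (1/q + c/r)⁻¹`. -/
theorem filtering_error_covariance_lower_bound {n p : ℕ}
    (q r c : ℝ) (hq : 0 < q) (hr : 0 < r) (hc : 0 < c)
    (P : Matrix (Fin n) (Fin n) ℝ) (S : Matrix (Fin p) (Fin p) ℝ)
    (C : Matrix (Fin p) (Fin n) ℝ)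
    (hP : P.PosDef) (hS : S.PosDef)
    (hqP : (P - q • (1 : Matrix (Fin n) (Fin n) ℝ)).PosSemidef)
    (hrS : (S - r • (1 : Matrix (Fin p) (Fin p) ℝ)).PosSemidef)
    (hC : (c • (1 : Matrix (Fin p) (Fin p) ℝ) - C * Cᵀ).PosSemidef)
    (Ξᵤ : Matrix (Fin n) (Fin n) ℝ)
    (hΞᵤ : Ξᵤ = P - P * Cᵀ * (C * P * Cᵀ + S)⁻¹ * C * P)
    (ε : ℝ) (hε : ε = (1 / q + c / r)⁻¹) :
    (Ξᵤ - ε • (1 : Matrix (Fin n) (Fin n) ℝ)).PosSemidef := by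
  have hM : (C * P * Cᵀ + S).PosDef := by
    have h := hP.posSemidef.mul_mul_conjTranspose_same C
    rw [conjTranspose_eq_transpose_of_trivial] at h
    exact Matrix.PosDef.posSemidef_add h hS
  have hdet : IsUnit (C * P * Cᵀ + S).det := (Matrix.isUnit_iff_isUnit_det _).1 hM.isUnit
  obtain ⟨K, hK⟩ : ∃ K, K = P * Cᵀ * (C * P * Cᵀ + S)⁻¹ := ⟨_, rfl⟩
  have hKM : K * (C * P * Cᵀ + S) = P * Cᵀ := by
    rw [hK, Matrix.nonsing_inv_mul_cancel_right _ _ hdet]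
  rw [← hK] at hΞᵤ
  obtain ⟨B, hB⟩ : ∃ B, B = K * C := ⟨_, rfl⟩
  obtain ⟨A, hA⟩ : ∃ A, A = 1 - B := ⟨_, rfl⟩
  have joseph : Ξᵤ = A * P * Aᵀ + K * S * Kᵀ := by
    have h2 : K * (C * P * Cᵀ + S) * Kᵀ = P * Cᵀ * Kᵀ := by rw [hKM]
    have h3 : K * S * Kᵀ = P * Cᵀ * Kᵀ - K * C * P * Cᵀ * Kᵀ := by
      rw [← h2]
      simp only [Matrix.mul_add, Matrix.add_mul, Matrix.mul_assoc]
      abel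
    rw [h3, hΞᵤ, hA, hB]
    simp only [transpose_sub, transpose_one, transpose_mul, Matrix.mul_sub, Matrix.sub_mul,
      Matrix.mul_one, Matrix.one_mul, Matrix.mul_assoc]
    abel
  have t1 := hqP.mul_mul_conjTranspose_same A
  have t2 := hrS.mul_mul_conjTranspose_same K
  have t3 := (hC.mul_mul_conjTranspose_same K).smul (div_pos hr hc).le
  have hs : 0 < 1 / (q + r / c) := by positivity
  have t4 := (Matrix.posSemidef_self_mul_conjTranspose (q • A - (r / c) • B)).smul hs.le
  simp only [conjTranspose_eq_transpose_of_trivial] at t1 t2 t3 t4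
  have key : Ξᵤ - ε • (1 : Matrix (Fin n) (Fin n) ℝ) =
      A * (P - q • 1) * Aᵀ + K * (S - r • 1) * Kᵀ
        + (r / c) • (K * (c • 1 - C * Cᵀ) * Kᵀ)
        + (1 / (q + r / c)) • ((q • A - (r / c) • B) * (q • A - (r / c) • B)ᵀ) := by
    have hone : (1 : Matrix (Fin n) (Fin n) ℝ) = (A + B) * (A + B)ᵀ := by
      rw [hA]; simp
    have hBB : K * (C * Cᵀ) * Kᵀ = B * Bᵀ := by
      rw [hB]; simp only [transpose_mul, Matrix.mul_assoc]
    have e1 : A * (P - q • 1) * Aᵀ = A * P * Aᵀ - q • (A * Aᵀ) := by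
      simp [Matrix.mul_sub, Matrix.sub_mul]
    have e2 : K * (S - r • 1) * Kᵀ = K * S * Kᵀ - r • (K * Kᵀ) := by
      simp [Matrix.mul_sub, Matrix.sub_mul]
    have e3 : K * (c • 1 - C * Cᵀ) * Kᵀ = c • (K * Kᵀ) - B * Bᵀ := by
      rw [← hBB]; simp [Matrix.mul_sub, Matrix.sub_mul]
    have e4 : ε • (1 : Matrix (Fin n) (Fin n) ℝ) =
        ε • (A * Aᵀ + A * Bᵀ + B * Aᵀ + B * Bᵀ) := by
      rw [hone]
      simp only [transpose_add, Matrix.mul_add, Matrix.add_mul]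
      congr 1; abel
    have e5 : (q • A - (r / c) • B) * (q • A - (r / c) • B)ᵀ =
        (q * q) • (A * Aᵀ) - (q * (r / c)) • (A * Bᵀ) - (q * (r / c)) • (B * Aᵀ)
          + ((r / c) * (r / c)) • (B * Bᵀ) := by
      simp only [transpose_sub, transpose_smul, Matrix.mul_sub, Matrix.sub_mul,
        Matrix.smul_mul, Matrix.mul_smul]
      module
    have hε' : ε = q * r / (r + c * q) := by
      rw [hε]; field_simp
    have hd : 0 < r + c * q := by positivity
    have hd' : q + r / c = (r + c * q) / c := by field_simp; ring
    rw [e1, e2, e3, e4, e5, joseph, hε', hd']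
    match_scalars <;> field_simp <;> ring
  rw [key]
  exact ((t1.add t2).add t3).add t4
end

section
/- Let n ∈ ℕ, let γ₁, γ₂ > 0 be real numbers, let G be a symmetric positive semidefinite n×n real matrix, and let Ξ : ℕ×ℕ → (symmetric n×n real matrices) satisfy Ξ(l,k) ⪯ γ₁·Ξ(l,k−1) + γ₂·Ξ(l−1,k) + G for all l, k ≥ 1. Define ℸ : ℕ×ℕ → ℝ by ℸ(0,0) = 1, ℸ(0,k) = γ₁·ℸ(0,k−1) for k ≥ 1, ℸ(l,0) = γ₂·ℸ(l−1,0) for l ≥ 1, and ℸ(l,k) = γ₁·ℸ(l,k−1) + γ₂·ℸ(l−1,k) for l, k ≥ 1. Then for all l, k ≥ 1: Ξ(l,k) ⪯ Σ_{s=1}^{l} γ₁·ℸ(l−s, k−1)·Ξ(s,0) + Σ_{t=1}^{k} γ₂·ℸ(l−1, k−t)·Ξ(0,t) + ( Σ_{s=0}^{l−1} Σ_{t=0}^{k−1} ℸ(l−s−1, k−t−1) )·G. -/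
open Matrix Finset

theorem aux_R (γ₁ γ₂ : ℝ) (d : ℕ → ℕ → ℝ)
    (h00 : d 0 0 = 1)
    (h0k : ∀ k : ℕ, d 0 (k + 1) = γ₁ * d 0 k)
    (hl0 : ∀ l : ℕ, d (l + 1) 0 = γ₂ * d l 0)
    (hlk : ∀ l k : ℕ, d (l + 1) (k + 1) = γ₁ * d (l + 1) k + γ₂ * d l (k + 1)) :
    (∀ k, ∑ t ∈ range (k + 1 + 1), d 0 t = γ₁ * ∑ t ∈ range (k + 1), d 0 t + 1) ∧
    (∀ l k, ∑ t ∈ range (k + 1 + 1), d (l + 1) t =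
      γ₁ * ∑ t ∈ range (k + 1), d (l + 1) t + γ₂ * ∑ t ∈ range (k + 1 + 1), d l t) := by
  constructor
  · intro k
    rw [Finset.sum_range_succ', h00, Finset.mul_sum]
    simp only [h0k]
  · intro l k
    rw [Finset.sum_range_succ', hl0, Finset.sum_range_succ' (fun t => d l t) (k + 1)]
    simp only [hlk, Finset.sum_add_distrib, ← Finset.mul_sum]
    ring

theorem aux_D (γ₁ γ₂ : ℝ) (d : ℕ → ℕ → ℝ)
    (h00 : d 0 0 = 1)
    (h0k : ∀ k : ℕ, d 0 (k + 1) = γ₁ * d 0 k)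
    (hl0 : ∀ l : ℕ, d (l + 1) 0 = γ₂ * d l 0)
    (hlk : ∀ l k : ℕ, d (l + 1) (k + 1) = γ₁ * d (l + 1) k + γ₂ * d l (k + 1)) (l k : ℕ) :
    ∑ s ∈ range (l + 1), ∑ t ∈ range (k + 1), d s t =
      γ₁ * (∑ s ∈ range (l + 1), ∑ t ∈ range k, d s t) +
      γ₂ * (∑ s ∈ range l, ∑ t ∈ range (k + 1), d s t) + 1 := by
  obtain ⟨h1, h2⟩ := aux_R γ₁ γ₂ d h00 h0k hl0 hlk
  cases k with
  | zero =>
    simp only [zero_add, Finset.sum_range_one, Finset.range_zero, Finset.sum_empty,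
      Finset.sum_const_zero, mul_zero]
    rw [Finset.sum_range_succ', h00, Finset.mul_sum]
    simp only [hl0]
  | succ k =>
    rw [Finset.sum_range_succ', h1,
      Finset.sum_range_succ' (fun s => ∑ t ∈ range (k + 1), d s t) l]
    simp only [h2, Finset.sum_add_distrib, ← Finset.mul_sum]
    ring

theorem aux_refl (d : ℕ → ℕ → ℝ) (l k : ℕ) :
    ∑ s ∈ range l, ∑ t ∈ range k, d (l - s - 1) (k - t - 1) =
      ∑ s ∈ range l, ∑ t ∈ range k, d s t := by
  rw [← Finset.sum_range_reflect (fun s => ∑ t ∈ range k, d s t)]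
  refine Finset.sum_congr rfl fun s _ => ?_
  rw [← Finset.sum_range_reflect (fun t => d (l - 1 - s) t)]
  refine Finset.sum_congr rfl fun t _ => ?_
  rw [Nat.sub_right_comm l s 1, Nat.sub_right_comm k t 1]

theorem aux_Icc {M : Type*} [AddCommMonoid M] (f : ℕ → M) (l : ℕ) :
    ∑ s ∈ Finset.Icc 1 l, f s = ∑ s ∈ range l, f (s + 1) := by
  rw [Finset.range_eq_Ico, Finset.sum_Ico_add' f 0 l 1]
  rfl

theorem aux_conv {M : Type*} [AddCommGroup M] [Module ℝ M] (a b c : ℝ) (d : ℕ → ℕ → ℝ)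
    (h0k : ∀ k : ℕ, d 0 (k + 1) = a * d 0 k)
    (hlk : ∀ l k : ℕ, d (l + 1) (k + 1) = a * d (l + 1) k + b * d l (k + 1))
    (x : ℕ → M) (l k : ℕ) :
    ∑ s ∈ range (l + 1), (c * d (l - s) (k + 1)) • x s =
      a • (∑ s ∈ range (l + 1), (c * d (l - s) k) • x s)
      + b • (∑ s ∈ range l, (c * d (l - 1 - s) (k + 1)) • x s) := by
  rw [Finset.sum_range_succ, Finset.sum_range_succ, Nat.sub_self, h0k, smul_add,
    Finset.smul_sum, Finset.smul_sum, add_right_comm, ← Finset.sum_add_distrib]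
  congr 1
  · refine Finset.sum_congr rfl fun s hs => ?_
    have hs := Finset.mem_range.1 hs
    obtain ⟨m, rfl⟩ : ∃ m, l = s + m + 1 := ⟨l - s - 1, by omega⟩
    rw [show s + m + 1 - s = m + 1 by omega, show s + m + 1 - 1 - s = m by omega, hlk]
    module
  · module

theorem aux_bd {M : Type*} [AddCommGroup M] [Module ℝ M] (b c : ℝ) (d : ℕ → ℕ → ℝ)
    (h00 : d 0 0 = 1)
    (hl0 : ∀ l : ℕ, d (l + 1) 0 = b * d l 0)
    (x : ℕ → M) (l : ℕ) :
    ∑ s ∈ range (l + 1), (c * d (l - s) 0) • x s =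
      c • x l + b • (∑ s ∈ range l, (c * d (l - 1 - s) 0) • x s) := by
  rw [Finset.sum_range_succ, Nat.sub_self, h00, mul_one, add_comm, Finset.smul_sum]
  congr 1
  refine Finset.sum_congr rfl fun s hs => ?_
  have hs := Finset.mem_range.1 hs
  obtain ⟨m, rfl⟩ : ∃ m, l = s + m + 1 := ⟨l - s - 1, by omega⟩
  rw [show s + m + 1 - s = m + 1 by omega, show s + m + 1 - 1 - s = m by omega, hl0]
  module

/-- Two-dimensional Grönwall-type comparison for the filtering error covariance:
if `Ξ(l,k) ⪯ γ₁ Ξ(l,k−1) + γ₂ Ξ(l−1,k) + G` for all `l,k ≥ 1`, and `ℸ` is the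
associated scalar recursion with `ℸ(0,0) = 1`, then for all `l,k ≥ 1`
`Ξ(l,k) ⪯ ∑_{s=1}^{l} γ₁ ℸ(l−s,k−1) Ξ(s,0) + ∑_{t=1}^{k} γ₂ ℸ(l−1,k−t) Ξ(0,t)
  + (∑_{s=0}^{l−1} ∑_{t=0}^{k−1} ℸ(l−s−1,k−t−1)) G`. -/
theorem two_dim_gronwall_covariance_bound {n : ℕ}
    (γ₁ γ₂ : ℝ) (hγ₁ : 0 < γ₁) (hγ₂ : 0 < γ₂)
    (G : Matrix (Fin n) (Fin n) ℝ) (hG : G.PosSemidef)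
    (Ξ : ℕ → ℕ → Matrix (Fin n) (Fin n) ℝ)
    (hΞsymm : ∀ l k, (Ξ l k).IsSymm)
    (hΞrec : ∀ l k : ℕ,
      (γ₁ • Ξ (l + 1) k + γ₂ • Ξ l (k + 1) + G - Ξ (l + 1) (k + 1)).PosSemidef)
    (ℸ : ℕ → ℕ → ℝ)
    (hℸ00 : ℸ 0 0 = 1)
    (hℸ0k : ∀ k : ℕ, ℸ 0 (k + 1) = γ₁ * ℸ 0 k)
    (hℸl0 : ∀ l : ℕ, ℸ (l + 1) 0 = γ₂ * ℸ l 0)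
    (hℸlk : ∀ l k : ℕ, ℸ (l + 1) (k + 1) = γ₁ * ℸ (l + 1) k + γ₂ * ℸ l (k + 1)) :
    ∀ l k : ℕ, 1 ≤ l → 1 ≤ k →
      ((∑ s ∈ Finset.Icc 1 l, (γ₁ * ℸ (l - s) (k - 1)) • Ξ s 0)
        + (∑ t ∈ Finset.Icc 1 k, (γ₂ * ℸ (l - 1) (k - t)) • Ξ 0 t)
        + (∑ s ∈ Finset.range l, ∑ t ∈ Finset.range k,
            ℸ (l - s - 1) (k - t - 1)) • G
        - Ξ l k).PosSemidef := by
  have key : ∀ l k : ℕ,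
      ((∑ s ∈ range (l + 1), (γ₁ * ℸ (l - s) k) • Ξ (s + 1) 0)
        + (∑ t ∈ range (k + 1), (γ₂ * ℸ l (k - t)) • Ξ 0 (t + 1))
        + (∑ s ∈ range (l + 1), ∑ t ∈ range (k + 1), ℸ s t) • G
        - Ξ (l + 1) (k + 1)).PosSemidef := by
    have hD := aux_D γ₁ γ₂ ℸ hℸ00 hℸ0k hℸl0 hℸlk
    have hA := fun l k => aux_conv γ₁ γ₂ γ₁ ℸ hℸ0k hℸlk (fun s => Ξ (s + 1) 0) l k
    have hA0 := fun l => aux_bd γ₂ γ₁ ℸ hℸ00 hℸl0 (fun s => Ξ (s + 1) 0) l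
    have hC := fun l k => aux_conv γ₂ γ₁ γ₂ (fun i j => ℸ j i) hℸl0
      (fun i j => by rw [hℸlk, add_comm]) (fun s => Ξ 0 (s + 1)) k l
    have hC0 := fun k => aux_bd γ₁ γ₂ (fun i j => ℸ j i) hℸ00 hℸ0k (fun s => Ξ 0 (s + 1)) k
    intro l
    induction l with
    | zero =>
      intro k
      induction k with
      | zero =>
        convert hΞrec 0 0 using 1
        simp [hℸ00]
      | succ k ih =>
        convert (hΞrec 0 (k + 1)).add (ih.smul hγ₁.le) using 1
        rw [hD, hA, hC0]
        simp only [Finset.range_zero, Finset.sum_empty, Nat.add_sub_cancel]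
        module
    | succ l ihl =>
      intro k
      induction k with
      | zero =>
        convert (hΞrec (l + 1) 0).add ((ihl 0).smul hγ₂.le) using 1
        rw [hD, hA0, hC]
        simp only [Finset.range_zero, Finset.sum_empty, Nat.add_sub_cancel,
          Finset.sum_const_zero]
        module
      | succ k ih =>
        convert ((hΞrec (l + 1) (k + 1)).add ((ihl (k + 1)).smul hγ₂.le)).add
          (ih.smul hγ₁.le) using 1
        rw [hD, hA, hC]
        simp only [Nat.add_sub_cancel]
        module
  intro l k hl hk
  obtain ⟨l, rfl⟩ := Nat.exists_eq_add_of_le' hl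
  obtain ⟨k, rfl⟩ := Nat.exists_eq_add_of_le' hk
  rw [aux_refl, aux_Icc, aux_Icc]
  simpa only [Nat.add_sub_add_right, Nat.add_sub_cancel] using key l k
end

section
/- Let P be a symmetric positive definite n×n real matrix, R a symmetric positive definite p×p real matrix, D a symmetric positive semidefinite p×p real matrix, and C a p×n real matrix. For ρ ∈ (0,1] define R̄(ρ) = ρ²·(C P Cᵀ + R) + ρ(1−ρ)·D. Then R̄(ρ) is positive definite for every ρ ∈ (0,1], and the function f(ρ) = tr(P) − ρ²·tr( P Cᵀ R̄(ρ)⁻¹ C P ) is differentiable on (0,1) with derivative f′(ρ) = − tr( K(ρ) D K(ρ)ᵀ ), where K(ρ) = ρ·P Cᵀ R̄(ρ)⁻¹; in particular f′(ρ) ≤ 0 on (0,1). -/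
open Matrix Set

section
attribute [local instance] Matrix.linftyOpNormedRing Matrix.linftyOpNormedAlgebra

theorem trace_inv_hasDerivAt_aux {p : ℕ} (L : Matrix (Fin p) (Fin p) ℝ →ₗ[ℝ] ℝ)
    (S D : Matrix (Fin p) (Fin p) ℝ) (Rb : ℝ → Matrix (Fin p) (Fin p) ℝ)
    (hRb : ∀ ρ : ℝ, Rb ρ = ρ ^ 2 • S + (ρ * (1 - ρ)) • D) (ρ : ℝ) (hρ : ρ ≠ 0)
    (hu : IsUnit (Rb ρ)) :
    HasDerivAt (fun x => x ^ 2 * L (Rb x)⁻¹) (ρ ^ 2 * L ((Rb ρ)⁻¹ * D * (Rb ρ)⁻¹)) ρ := by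
  have h1 : HasDerivAt Rb ((2 / ρ) • Rb ρ - D) ρ := by
    have a : HasDerivAt (fun x : ℝ => x ^ 2) (2 * ρ) ρ := by
      simpa using hasDerivAt_pow 2 ρ
    have b : HasDerivAt (fun x : ℝ => x * (1 - x)) (1 - 2 * ρ) ρ := by
      have := (hasDerivAt_id ρ).mul ((hasDerivAt_id ρ).const_sub 1)
      refine this.congr_deriv ?_
      simp; ring
    have h := (a.smul_const S).add (b.smul_const D)
    have e : Rb = (fun x : ℝ => x ^ 2 • S) + (fun x : ℝ => (x * (1 - x)) • D) := by
      funext x; simp [hRb]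
    rw [← e] at h
    refine h.congr_deriv ?_
    rw [hRb]
    ext i j
    simp
    field_simp
    ring
  have hd : IsUnit (Rb ρ).det := (Matrix.isUnit_iff_isUnit_det _).1 hu
  obtain ⟨u, hu'⟩ := hu
  have hui : ((u⁻¹ : (Matrix (Fin p) (Fin p) ℝ)ˣ) : Matrix (Fin p) (Fin p) ℝ) = (Rb ρ)⁻¹ := by
    rw [← hu', Matrix.coe_units_inv]
  have h2 : HasDerivAt (fun x => (Rb x)⁻¹)
      (-((Rb ρ)⁻¹ * ((2 / ρ) • Rb ρ - D) * (Rb ρ)⁻¹)) ρ := by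
    have h3 := hasFDerivAt_ringInverse (𝕜 := ℝ) u
    rw [hu'] at h3
    have h4 := h3.comp_hasDerivAt ρ h1
    simp only [hui] at h4
    have e : (fun x => (Rb x)⁻¹) = Ring.inverse ∘ Rb := by
      funext x; simp [Matrix.nonsing_inv_eq_ringInverse]
    rw [e]
    refine h4.congr_deriv ?_
    simp
  have h5 := (L.toContinuousLinearMap.hasFDerivAt (x := (Rb ρ)⁻¹)).comp_hasDerivAt ρ h2
  have h6 := (hasDerivAt_pow 2 ρ).mul h5
  refine h6.congr_deriv ?_
  have e : (-((Rb ρ)⁻¹ * ((2 / ρ) • Rb ρ - D) * (Rb ρ)⁻¹))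
      = (Rb ρ)⁻¹ * D * (Rb ρ)⁻¹ - (2 / ρ) • (Rb ρ)⁻¹ := by
    rw [mul_sub, sub_mul, Matrix.mul_smul, Matrix.nonsing_inv_mul _ hd, Matrix.smul_mul, one_mul]
    abel
  rw [e]
  change ((2 : ℕ) : ℝ) * ρ ^ (2 - 1) * L (Rb ρ)⁻¹
    + ρ ^ 2 * L ((Rb ρ)⁻¹ * D * (Rb ρ)⁻¹ - (2 / ρ) • (Rb ρ)⁻¹) = _
  rw [L.map_sub, L.map_smul, smul_eq_mul]
  field_simp
  norm_num
  ring
end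

/-- Derivative of the performance index in the activation probability: with
`R̄(ρ) = ρ²(C P Cᵀ + R) + ρ(1−ρ)D`, `R̄(ρ)` is positive definite on `(0,1]`, and
`f(ρ) = tr(P) − ρ² tr(P Cᵀ R̄(ρ)⁻¹ C P)` is differentiable on `(0,1)` with
`f′(ρ) = − tr(K(ρ) D K(ρ)ᵀ) ≤ 0`, where `K(ρ) = ρ P Cᵀ R̄(ρ)⁻¹`. -/
theorem performance_index_derivative {n p : ℕ}
    (P : Matrix (Fin n) (Fin n) ℝ) (R : Matrix (Fin p) (Fin p) ℝ)
    (D : Matrix (Fin p) (Fin p) ℝ) (C : Matrix (Fin p) (Fin n) ℝ)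
    (hP : P.PosDef) (hR : R.PosDef) (hD : D.PosSemidef)
    (Rb : ℝ → Matrix (Fin p) (Fin p) ℝ)
    (hRb : ∀ ρ : ℝ, Rb ρ = ρ ^ 2 • (C * P * Cᵀ + R) + (ρ * (1 - ρ)) • D)
    (f : ℝ → ℝ)
    (hf : ∀ ρ : ℝ, f ρ = P.trace - ρ ^ 2 * (P * Cᵀ * (Rb ρ)⁻¹ * C * P).trace)
    (K : ℝ → Matrix (Fin n) (Fin p) ℝ)
    (hK : ∀ ρ : ℝ, K ρ = ρ • (P * Cᵀ * (Rb ρ)⁻¹)) :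
    (∀ ρ ∈ Ioc (0 : ℝ) 1, (Rb ρ).PosDef) ∧
    (∀ ρ ∈ Ioo (0 : ℝ) 1,
      HasDerivAt f (-(K ρ * D * (K ρ)ᵀ).trace) ρ ∧
        -(K ρ * D * (K ρ)ᵀ).trace ≤ 0) := by
  have hS : (C * P * Cᵀ + R).PosDef := by
    have h := hP.posSemidef.mul_mul_conjTranspose_same C
    rw [Matrix.conjTranspose_eq_transpose_of_trivial] at h
    exact Matrix.PosDef.posSemidef_add h hR
  have hpos : ∀ ρ ∈ Ioc (0 : ℝ) 1, (Rb ρ).PosDef := by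
    intro ρ hρ
    rw [hRb]
    exact (hS.smul (pow_pos hρ.1 2)).add_posSemidef
      (hD.smul (mul_nonneg hρ.1.le (sub_nonneg.2 hρ.2)))
  refine ⟨hpos, fun ρ hρ => ⟨?_, ?_⟩⟩
  · have hp := hpos ρ ⟨hρ.1, hρ.2.le⟩
    let L : Matrix (Fin p) (Fin p) ℝ →ₗ[ℝ] ℝ :=
      { toFun := fun M => (P * Cᵀ * M * C * P).trace
        map_add' := by intro x y; simp [mul_add, add_mul, Matrix.mul_add, Matrix.add_mul]
        map_smul' := by intro x y; simp }
    have h := trace_inv_hasDerivAt_aux L _ D Rb hRb ρ hρ.1.ne' hp.isUnit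
    have hf' : f = fun x => P.trace - x ^ 2 * L (Rb x)⁻¹ := funext hf
    rw [hf']
    refine (h.const_sub P.trace).congr_deriv ?_
    have t1 : (Rb ρ)ᵀ = Rb ρ := by
      have := hp.isHermitian.eq
      rwa [Matrix.conjTranspose_eq_transpose_of_trivial] at this
    have t2 : Pᵀ = P := by
      have := hP.isHermitian.eq
      rwa [Matrix.conjTranspose_eq_transpose_of_trivial] at this
    rw [hK]
    simp only [Matrix.transpose_smul, Matrix.transpose_mul, Matrix.transpose_transpose, t2,
      Matrix.transpose_nonsing_inv, t1, Matrix.smul_mul, Matrix.mul_smul, Matrix.trace_smul,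
      smul_eq_mul, L, LinearMap.coe_mk, AddHom.coe_mk, Matrix.mul_assoc]
    ring
  · have h := (hD.mul_mul_conjTranspose_same (K ρ)).trace_nonneg
    rw [Matrix.conjTranspose_eq_transpose_of_trivial] at h
    linarith
end

section
/- Let P be a symmetric positive definite n×n real matrix, R a symmetric positive definite p×p real matrix, D a symmetric positive semidefinite p×p real matrix, and C a p×n real matrix. For ρ ∈ (0,1] define R̄(ρ) = ρ²·(C P Cᵀ + R) + ρ(1−ρ)·D and f(ρ) = tr(P) − ρ²·tr( P Cᵀ R̄(ρ)⁻¹ C P ). Then f is non-increasing on (0,1]: for all 0 < ρ₁ ≤ ρ₂ ≤ 1, f(ρ₂) ≤ f(ρ₁). -/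
open Matrix Set

lemma inv_sub_inv_psd {p : ℕ} (A E : Matrix (Fin p) (Fin p) ℝ) (hA : A.PosDef)
    (hE : E.PosSemidef) : (A⁻¹ - (A + E)⁻¹).PosSemidef := by
  have hB : (A + E).PosDef := hA.add_posSemidef hE
  have hAu : IsUnit A.det := (Matrix.isUnit_iff_isUnit_det _).1 hA.isUnit
  have hBu : IsUnit (A + E).det := (Matrix.isUnit_iff_isUnit_det _).1 hB.isUnit
  have hK : (E + Eᴴ * A⁻¹ * E).PosSemidef :=
    hE.add (hA.inv.posSemidef.conjTranspose_mul_mul_same E)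
  have h := hK.conjTranspose_mul_mul_same (A + E)⁻¹
  rw [hB.inv.isHermitian.eq, hE.isHermitian.eq] at h
  have key : E + E * A⁻¹ * E = (A + E) * A⁻¹ * (A + E) - (A + E) := by
    simp only [add_mul, mul_add, Matrix.mul_nonsing_inv _ hAu, Matrix.mul_assoc,
      Matrix.nonsing_inv_mul _ hAu, Matrix.mul_one, Matrix.one_mul]

    abel
  have e : (A + E)⁻¹ * (E + E * A⁻¹ * E) * (A + E)⁻¹ = A⁻¹ - (A + E)⁻¹ := by
    rw [key]
    simp only [mul_sub, sub_mul, Matrix.mul_assoc, Matrix.mul_nonsing_inv _ hBu,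
      Matrix.mul_one, Matrix.nonsing_inv_mul_cancel_left _ _ hBu]
  rwa [e] at h

/-- Monotonicity of the estimation performance index in the activation
probability: with `R̄(ρ) = ρ²(C P Cᵀ + R) + ρ(1−ρ)D` and
`f(ρ) = tr(P) − ρ² tr(P Cᵀ R̄(ρ)⁻¹ C P)`, the function `f` is non-increasing on
`(0,1]`. -/
theorem performance_index_nonincreasing {n p : ℕ}
    (P : Matrix (Fin n) (Fin n) ℝ) (R : Matrix (Fin p) (Fin p) ℝ)
    (D : Matrix (Fin p) (Fin p) ℝ) (C : Matrix (Fin p) (Fin n) ℝ)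
    (hP : P.PosDef) (hR : R.PosDef) (hD : D.PosSemidef)
    (Rb : ℝ → Matrix (Fin p) (Fin p) ℝ)
    (hRb : ∀ ρ : ℝ, Rb ρ = ρ ^ 2 • (C * P * Cᵀ + R) + (ρ * (1 - ρ)) • D)
    (f : ℝ → ℝ)
    (hf : ∀ ρ : ℝ, f ρ = P.trace - ρ ^ 2 * (P * Cᵀ * (Rb ρ)⁻¹ * C * P).trace) :
    ∀ ρ₁ ρ₂ : ℝ, 0 < ρ₁ → ρ₁ ≤ ρ₂ → ρ₂ ≤ 1 → f ρ₂ ≤ f ρ₁ := by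
  intro a b ha hab hb
  have hb0 : 0 < b := ha.trans_le hab
  have hS : (C * P * Cᵀ + R).PosDef := by
    have := hP.posSemidef.mul_mul_conjTranspose_same C
    rw [conjTranspose_eq_transpose_of_trivial] at this
    exact hR.posSemidef_add this
  set S := C * P * Cᵀ + R
  clear_value S
  have hM : ∀ r : ℝ, 0 < r → r ≤ 1 → (S + ((1 - r) / r) • D).PosDef := fun r h0 h1 =>
    hS.add_posSemidef (hD.smul (div_nonneg (by linarith) h0.le))
  have hfr : ∀ r : ℝ, 0 < r → r ≤ 1 →
      f r = P.trace - (P * Cᵀ * (S + ((1 - r) / r) • D)⁻¹ * C * P).trace := by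
    intro r h0 h1
    have hr : r ^ 2 ≠ 0 := by positivity
    have e : Rb r = r ^ 2 • (S + ((1 - r) / r) • D) := by
      rw [hRb, smul_add, smul_smul]
      congr 2
      field_simp
    have hu : IsUnit (S + ((1 - r) / r) • D).det :=
      (Matrix.isUnit_iff_isUnit_det _).1 (hM r h0 h1).isUnit
    have ei : (Rb r)⁻¹ = (r ^ 2)⁻¹ • (S + ((1 - r) / r) • D)⁻¹ := by
      apply Matrix.inv_eq_right_inv
      rw [e, Matrix.smul_mul, Matrix.mul_smul, smul_smul, mul_inv_cancel₀ hr, one_smul,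
        Matrix.mul_nonsing_inv _ hu]
    rw [hf, ei]
    simp only [Matrix.mul_smul, Matrix.smul_mul, Matrix.trace_smul, smul_eq_mul]
    rw [mul_inv_cancel_left₀ hr]
  rw [hfr a ha (hab.trans hb), hfr b hb0 hb]
  have ht : 0 ≤ (1 - a) / a - (1 - b) / b := by
    have : (1 - a) / a - (1 - b) / b = (b - a) / (a * b) := by
      field_simp
      ring
    rw [this]
    exact div_nonneg (by linarith) (by positivity)
  have h := inv_sub_inv_psd _ (((1 - a) / a - (1 - b) / b) • D) (hM b hb0 hb) (hD.smul ht)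
  have e2 : S + ((1 - b) / b) • D + ((1 - a) / a - (1 - b) / b) • D
      = S + ((1 - a) / a) • D := by
    rw [add_assoc, ← add_smul]
    congr 2
    ring
  rw [e2] at h
  have h2 := (h.conjTranspose_mul_mul_same (C * P)).trace_nonneg
  rw [conjTranspose_mul, hP.isHermitian.eq, conjTranspose_eq_transpose_of_trivial] at h2
  simp only [Matrix.mul_sub, Matrix.sub_mul, Matrix.trace_sub, ← Matrix.mul_assoc] at h2
  linarith
end

section
/- Let ℏ ∈ ℕ and let ı₀,…,ı_ℏ and ȷ₀,…,ȷ_ℏ be natural numbers with ı₀ = ȷ₀ = 0, ı_s ≤ ȷ_s for all 0 ≤ s ≤ ℏ, and ȷ_s < ı_{s+1} for all 0 ≤ s < ℏ. Let i, j ∈ ℕ with ı_ℏ ≤ i and ȷ_ℏ ≤ j. For 0 ≤ s < ℏ define 𝓜_s = { (l,k) ∈ ℕ² : ı_s ≤ l < ı_{s+1} and ȷ_s ≤ k ≤ j } ∪ { (l,k) ∈ ℕ² : ı_{s+1} ≤ l ≤ i and ȷ_s ≤ k < ȷ_{s+1} }, and define 𝓜_ℏ = { (l,k) ∈ ℕ²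 : ı_ℏ ≤ l ≤ i and ȷ_ℏ ≤ k ≤ j }. Then the sets 𝓜₀,…,𝓜_ℏ are pairwise disjoint, and for every 0 ≤ c ≤ ℏ one has ⋃_{s=c}^{ℏ} 𝓜_s = { (l,k) ∈ ℕ² : ı_c ≤ l ≤ i and ȷ_c ≤ k ≤ j } = { (l + ı_c, k + ȷ_c) : 0 ≤ l ≤ i − ı_c and 0 ≤ k ≤ j − ȷ_c }. -/
open Set

/-- Region-tiling identity for the observation partition reconstruction:
the regions `𝓜₀, …, 𝓜_ℏ` are pairwise disjoint, and for each channel `c`,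
`⋃_{s=c}^{ℏ} 𝓜_s` is exactly the rectangle `[im_c, i] × [jm_c, j]`, which is the
translate by `(im_c, jm_c)` of the delay-free rectangle
`[0, i−im_c] × [0, j−jm_c]`. -/
theorem region_tiling_identity (ℏ : ℕ) (im jm : ℕ → ℕ) (i j : ℕ)
    (him0 : im 0 = 0) (hjm0 : jm 0 = 0)
    (himjm : ∀ s ≤ ℏ, im s ≤ jm s)
    (hjmim : ∀ s < ℏ, jm s < im (s + 1))
    (hi : im ℏ ≤ i) (hj : jm ℏ ≤ j)
    (𝓜 : ℕ → Set (ℕ × ℕ))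
    (h𝓜lt : ∀ s < ℏ, 𝓜 s =
      {p : ℕ × ℕ | im s ≤ p.1 ∧ p.1 < im (s + 1) ∧ jm s ≤ p.2 ∧ p.2 ≤ j}
        ∪ {p : ℕ × ℕ | im (s + 1) ≤ p.1 ∧ p.1 ≤ i ∧ jm s ≤ p.2 ∧ p.2 < jm (s + 1)})
    (h𝓜ℏ : 𝓜 ℏ = {p : ℕ × ℕ | im ℏ ≤ p.1 ∧ p.1 ≤ i ∧ jm ℏ ≤ p.2 ∧ p.2 ≤ j}) :
    (∀ s ≤ ℏ, ∀ t ≤ ℏ, s ≠ t → Disjoint (𝓜 s) (𝓜 t)) ∧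
    (∀ c ≤ ℏ,
      (⋃ s ∈ Icc c ℏ, 𝓜 s)
        = {p : ℕ × ℕ | im c ≤ p.1 ∧ p.1 ≤ i ∧ jm c ≤ p.2 ∧ p.2 ≤ j} ∧
      (⋃ s ∈ Icc c ℏ, 𝓜 s)
        = (fun p : ℕ × ℕ => (p.1 + im c, p.2 + jm c)) ''
            {p : ℕ × ℕ | p.1 ≤ i - im c ∧ p.2 ≤ j - jm c}) := by
  have mono : ∀ s t, s ≤ t → t ≤ ℏ → im s ≤ im t ∧ jm s ≤ jm t := by
    intro s t hst
    induction t, hst using Nat.le_induction with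
    | base => intro _; exact ⟨le_rfl, le_rfl⟩
    | succ t hst ih =>
      intro ht
      have h1 := ih (by omega)
      have h2 := himjm t (by omega)
      have h3 := hjmim t (by omega)
      have h4 := himjm (t + 1) ht
      omega
  have mem : ∀ s < ℏ, ∀ p : ℕ × ℕ, p ∈ 𝓜 s ↔
      (im s ≤ p.1 ∧ p.1 < im (s + 1) ∧ jm s ≤ p.2 ∧ p.2 ≤ j) ∨
      (im (s + 1) ≤ p.1 ∧ p.1 ≤ i ∧ jm s ≤ p.2 ∧ p.2 < jm (s + 1)) := by
    intro s hs p
    rw [h𝓜lt s hs]; rfl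
  have memℏ : ∀ p : ℕ × ℕ, p ∈ 𝓜 ℏ ↔
      (im ℏ ≤ p.1 ∧ p.1 ≤ i ∧ jm ℏ ≤ p.2 ∧ p.2 ≤ j) := by
    intro p
    rw [h𝓜ℏ]; rfl
  have sub : ∀ s ≤ ℏ, ∀ p ∈ 𝓜 s, im s ≤ p.1 ∧ p.1 ≤ i ∧ jm s ≤ p.2 ∧ p.2 ≤ j := by
    intro s hs p hp
    rcases hs.lt_or_eq with h | h
    · rw [mem s h] at hp
      have h1 := mono s (s + 1) (by omega) h
      have h2 := mono (s + 1) ℏ h le_rfl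
      omega
    · subst h
      exact (memℏ p).1 hp
  have disj : ∀ s t, s < t → t ≤ ℏ → Disjoint (𝓜 s) (𝓜 t) := by
    intro s t hst ht
    rw [Set.disjoint_left]
    intro p hp hq
    have h1 := sub t ht p hq
    rw [mem s (by omega)] at hp
    have h2 := mono (s + 1) t hst ht
    omega
  have cover : ∀ c ≤ ℏ, ∀ p : ℕ × ℕ,
      (im c ≤ p.1 ∧ p.1 ≤ i ∧ jm c ≤ p.2 ∧ p.2 ≤ j) → ∃ s, c ≤ s ∧ s ≤ ℏ ∧ p ∈ 𝓜 s := by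
    intro c hc p
    induction hc using Nat.decreasingInduction with
    | self => intro h; exact ⟨ℏ, le_rfl, le_rfl, (memℏ p).2 h⟩
    | of_succ c hc ih =>
      intro h
      by_cases h' : im (c + 1) ≤ p.1 ∧ p.1 ≤ i ∧ jm (c + 1) ≤ p.2 ∧ p.2 ≤ j
      · obtain ⟨s, h1, h2, h3⟩ := ih h'
        exact ⟨s, by omega, h2, h3⟩
      · refine ⟨c, le_rfl, hc.le, (mem c hc p).2 ?_⟩
        omega
  have union : ∀ c ≤ ℏ, (⋃ s ∈ Icc c ℏ, 𝓜 s)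
      = {p : ℕ × ℕ | im c ≤ p.1 ∧ p.1 ≤ i ∧ jm c ≤ p.2 ∧ p.2 ≤ j} := by
    intro c hc
    ext p
    simp only [mem_iUnion, mem_Icc, mem_setOf_eq, exists_prop]
    constructor
    · rintro ⟨s, ⟨h1, h2⟩, h3⟩
      have h4 := sub s h2 p h3
      have h5 := mono c s h1 h2
      omega
    · intro h
      obtain ⟨s, h1, h2, h3⟩ := cover c hc p h
      exact ⟨s, ⟨h1, h2⟩, h3⟩
  refine ⟨?_, fun c hc => ⟨union c hc, ?_⟩⟩
  · intro s hs t ht hne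
    rcases lt_or_gt_of_ne hne with h | h
    · exact disj s t h ht
    · exact (disj t s h hs).symm
  · rw [union c hc]
    have h5 := mono c ℏ hc le_rfl
    ext ⟨a, b⟩
    simp only [mem_image, mem_setOf_eq, Prod.mk.injEq, Prod.exists]
    constructor
    · intro h
      exact ⟨a - im c, b - jm c, by omega, by omega, by omega⟩
    · rintro ⟨x, y, h1, h2, h3⟩
      omega
end

section
/- Let V be a real vector space. Let ℏ ∈ ℕ and let ı₀,…,ı_ℏ and ȷ₀,…,ȷ_ℏ be natural numbers with ı₀ = ȷ₀ = 0, ı_s ≤ ȷ_s for all 0 ≤ s ≤ ℏ, and ȷ_s < ı_{s+1} for all 0 ≤ s < ℏ. Let i, j ∈ ℕ with ı_ℏ ≤ i and ȷ_ℏ ≤ j, and set i_t = i − ı_{ℏ−t} and j_t = j − ȷ_{ℏ−t} for 0 ≤ t ≤ ℏ. Define 𝓝₀ = { (l,k) ∈ ℕ² : l ≤ i₀, k ≤ j₀ } and, for 1 ≤ t ≤ ℏ, 𝓝_t = { (l,k) : l ≤ i_t, k ≤ j_t } \ { (l,k) : l ≤ i_{t−1}, k ≤ j_{t−1} }. For 0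 ≤ s < ℏ define 𝓜_s = { (l,k) : ı_s ≤ l < ı_{s+1}, ȷ_s ≤ k ≤ j } ∪ { (l,k) : ı_{s+1} ≤ l ≤ i, ȷ_s ≤ k < ȷ_{s+1} }, and 𝓜_ℏ = { (l,k) : ı_ℏ ≤ l ≤ i, ȷ_ℏ ≤ k ≤ j }. Then for every family of vectors ȳ : {0,…,ℏ} × ℕ × ℕ → V, the ℝ-linear span of { ȳ(c, l + ı_c, k + ȷ_c) : 0 ≤ s ≤ ℏ, 0 ≤ c ≤ s, (l,k) ∈ 𝓝_{ℏ−s} } equals the ℝ-linear span of { ȳ(c, l, k) : 0 ≤ s ≤ ℏ, 0 ≤ c ≤ s, (l,k) ∈ 𝓜_s }. -/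
open Set

theorem exists_last_aux (P : ℕ → Prop) (h c : ℕ) (hc : c ≤ h) (hP : P c) :
    ∃ s, c ≤ s ∧ s ≤ h ∧ P s ∧ (s = h ∨ (s < h ∧ ¬ P (s + 1))) := by
  induction h, hc using Nat.le_induction with
  | base => exact ⟨c, le_rfl, le_rfl, hP, Or.inl rfl⟩
  | succ n hn ih =>
    obtain ⟨s, h1, h2, h3, h4⟩ := ih
    by_cases hs : s = n
    · subst hs
      by_cases hq : P (s + 1)
      · exact ⟨s + 1, by omega, le_rfl, hq, Or.inl rfl⟩
      · exact ⟨s, h1, by omega, h3, Or.inr ⟨by omega, hq⟩⟩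
    · rcases h4 with h4 | h4
      · exact absurd h4 hs
      · exact ⟨s, h1, by omega, h3, Or.inr ⟨by omega, h4.2⟩⟩

/-- Lemma 1 of the paper (observation partition reconstruction), componentwise:
the reconstructed delay-free activated observation sequence spans the same
linear space as the original delayed activated observation sequence. -/
theorem reconstructed_observations_span_eq
    (V : Type*) [AddCommGroup V] [Module ℝ V]
    (ℏ : ℕ) (im jm : ℕ → ℕ) (i j : ℕ)
    (him0 : im 0 = 0) (hjm0 : jm 0 = 0)
    (himjm : ∀ s ≤ ℏ, im s ≤ jm s)
    (hjmim : ∀ s < ℏ, jm s < im (s + 1))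
    (hi : im ℏ ≤ i) (hj : jm ℏ ≤ j)
    (𝒩 : ℕ → Set (ℕ × ℕ))
    (h𝒩0 : 𝒩 0 = {p : ℕ × ℕ | p.1 ≤ i - im ℏ ∧ p.2 ≤ j - jm ℏ})
    (h𝒩 : ∀ t, 1 ≤ t → t ≤ ℏ →
      𝒩 t = {p : ℕ × ℕ | p.1 ≤ i - im (ℏ - t) ∧ p.2 ≤ j - jm (ℏ - t)}
        \ {p : ℕ × ℕ | p.1 ≤ i - im (ℏ - (t - 1)) ∧ p.2 ≤ j - jm (ℏ - (t - 1))})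
    (𝓜 : ℕ → Set (ℕ × ℕ))
    (h𝓜lt : ∀ s < ℏ, 𝓜 s =
      {p : ℕ × ℕ | im s ≤ p.1 ∧ p.1 < im (s + 1) ∧ jm s ≤ p.2 ∧ p.2 ≤ j}
        ∪ {p : ℕ × ℕ | im (s + 1) ≤ p.1 ∧ p.1 ≤ i ∧ jm s ≤ p.2 ∧ p.2 < jm (s + 1)})
    (h𝓜ℏ : 𝓜 ℏ = {p : ℕ × ℕ | im ℏ ≤ p.1 ∧ p.1 ≤ i ∧ jm ℏ ≤ p.2 ∧ p.2 ≤ j})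
    (ybar : ℕ → ℕ → ℕ → V) :
    Submodule.span ℝ {v : V | ∃ s ≤ ℏ, ∃ c ≤ s, ∃ l k : ℕ,
        (l, k) ∈ 𝒩 (ℏ - s) ∧ v = ybar c (l + im c) (k + jm c)}
      = Submodule.span ℝ {v : V | ∃ s ≤ ℏ, ∃ c ≤ s, ∃ l k : ℕ,
          (l, k) ∈ 𝓜 s ∧ v = ybar c l k} := by
  have mono : ∀ c s, c ≤ s → s ≤ ℏ → im c ≤ im s ∧ jm c ≤ jm s := by
    intro c s hcs
    induction s, hcs using Nat.le_induction with
    | base => intro _; exact ⟨le_rfl, le_rfl⟩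
    | succ n hn ih =>
      intro h
      have h1 := ih (by omega)
      have h2 := himjm n (by omega)
      have h3 := hjmim n (by omega)
      have h4 := himjm (n + 1) h
      omega
  have hNlt : ∀ s < ℏ, ∀ l k, (l, k) ∈ 𝒩 (ℏ - s) ↔
      ((l ≤ i - im s ∧ k ≤ j - jm s) ∧ ¬ (l ≤ i - im (s + 1) ∧ k ≤ j - jm (s + 1))) := by
    intro s hs l k
    rw [h𝒩 (ℏ - s) (by omega) (by omega), show ℏ - (ℏ - s) = s by omega,
      show ℏ - (ℏ - s - 1) = s + 1 by omega]
    rfl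
  have hNh : ∀ l k, (l, k) ∈ 𝒩 (ℏ - ℏ) ↔ (l ≤ i - im ℏ ∧ k ≤ j - jm ℏ) := by
    intro l k
    rw [Nat.sub_self, h𝒩0]
    rfl
  have hMlt : ∀ s < ℏ, ∀ l k, (l, k) ∈ 𝓜 s ↔
      ((im s ≤ l ∧ l ≤ i ∧ jm s ≤ k ∧ k ≤ j) ∧
        ¬ (im (s + 1) ≤ l ∧ l ≤ i ∧ jm (s + 1) ≤ k ∧ k ≤ j)) := by
    intro s hs l k
    have m1 := mono s (s + 1) (by omega) hs
    have m2 := mono (s + 1) ℏ hs le_rfl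
    rw [h𝓜lt s hs]
    simp only [Set.mem_union, Set.mem_ofPred_eq]
    omega
  have hMh : ∀ l k, (l, k) ∈ 𝓜 ℏ ↔ (im ℏ ≤ l ∧ l ≤ i ∧ jm ℏ ≤ k ∧ k ≤ j) := by
    intro l k
    rw [h𝓜ℏ]
    rfl
  congr 1
  ext v
  constructor
  · rintro ⟨s, hs, c, hc, l, k, hm, rfl⟩
    have hb : l ≤ i - im s ∧ k ≤ j - jm s := by
      rcases Nat.lt_or_eq_of_le hs with h | h
      · exact ((hNlt s h l k).1 hm).1
      · subst h; exact (hNh l k).1 hm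
    have m1 := mono c s hc hs
    have m2 := mono s ℏ hs le_rfl
    obtain ⟨s', h1, h2, h3, h4⟩ := exists_last_aux
      (fun t => im t ≤ l + im c ∧ l + im c ≤ i ∧ jm t ≤ k + jm c ∧ k + jm c ≤ j) ℏ c
      (by omega) (by omega)
    refine ⟨s', h2, c, h1, _, _, ?_, rfl⟩
    rcases h4 with h4 | h4
    · subst h4; exact (hMh _ _).2 h3
    · exact (hMlt s' h4.1 _ _).2 ⟨h3, h4.2⟩
  · rintro ⟨s, hs, c, hc, l, k, hm, rfl⟩
    have hb : im s ≤ l ∧ l ≤ i ∧ jm s ≤ k ∧ k ≤ j := by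
      rcases Nat.lt_or_eq_of_le hs with h | h
      · exact ((hMlt s h l k).1 hm).1
      · subst h; exact (hMh l k).1 hm
    have m1 := mono c s hc hs
    obtain ⟨s', h1, h2, h3, h4⟩ := exists_last_aux
      (fun t => l - im c ≤ i - im t ∧ k - jm c ≤ j - jm t) ℏ c
      (by omega) (by omega)
    refine ⟨s', h2, c, h1, l - im c, k - jm c, ?_, ?_⟩
    · rcases h4 with h4 | h4
      · subst h4; exact (hNh _ _).2 h3
      · exact (hNlt s' h4.1 _ _).2 ⟨h3, h4.2⟩
    · rw [Nat.sub_add_cancel (by omega), Nat.sub_add_cancel (by omega)]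
end
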